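/- arXiv:2203.00671 — 4 statements merged into one kernel-verified Lean document; each statement's English description precedes it below -/
import Mathlib

section
/- Let f* be a feasible flow attaining F* = c^⊤f*, and let f be strictly feasible with Φ(f) ≤ 200·m·log(mU) and c^⊤f − F* ≥ (mU)^{−10}. Let 0 < ε < α/2, let g̃ ∈ ℝ^E satisfy ‖L(f)^{−1}(g̃ − g(f))‖_∞ ≤ ε, and let ℓ̃ ∈ ℝ^E_{>0} satisfy ℓ̃ ≈₂ ℓ(f); write L̃ = diag(ℓ̃). Then g̃^⊤(f* − f) ≤ −(α/4)·(100m + ‖L̃(f* − f)‖₁); equivalently, g̃^⊤(f* − f) / (100m + ‖L̃(f* − f)‖₁) ≤ −α/4. -/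
open Finset

noncomputable section

/-- The `v`-entry of `Bᵀ f`, where `B` is the edge-vertex incidence matrix of the
directed graph with edge maps `tail, head`. -/
def excess {V E : Type} [Fintype E] [DecidableEq V] (tail head : E → V)
    (f : E → ℝ) (v : V) : ℝ :=
  ∑ e, f e * ((if tail e = v then (1 : ℝ) else 0) - (if head e = v then 1 else 0))

/-- Feasibility for the min-cost flow instance: `Bᵀ f = d` and `lo ≤ f ≤ hi`. -/
def IsFeasible {V E : Type} [Fintype E] [DecidableEq V] (tail head : E → V)
    (d : V → ℝ) (lo hi : E → ℝ) (f : E → ℝ) : Prop :=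
  (∀ v, excess tail head f v = d v) ∧ ∀ e, lo e ≤ f e ∧ f e ≤ hi e

/-- Cost `cᵀ f` of a flow. -/
def fcost {E : Type} [Fintype E] (c f : E → ℝ) : ℝ := ∑ e, c e * f e

/-- The barrier parameter `α = 1/(1000 log (m U))`. -/
def fAlpha (m : ℕ) (U : ℝ) : ℝ := 1 / (1000 * Real.log (m * U))

/-- The potential `Φ(f)`. -/
def fPhi {E : Type} [Fintype E] (m : ℕ) (U Fstar : ℝ) (c lo hi f : E → ℝ) : ℝ :=
  20 * m * Real.log (fcost c f - Fstar)
    + ∑ e, ((hi e - f e) ^ (-fAlpha m U) + (f e - lo e) ^ (-fAlpha m U))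

/-- The length `ℓ(f)_e = (u⁺_e - f_e)^{-1-α} + (f_e - u⁻_e)^{-1-α}`. -/
def flen {E : Type} (m : ℕ) (U : ℝ) (lo hi f : E → ℝ) (e : E) : ℝ :=
  (hi e - f e) ^ (-1 - fAlpha m U) + (f e - lo e) ^ (-1 - fAlpha m U)

/-- The gradient `g(f)_e = 20m (cᵀf - F*)⁻¹ c_e + α (u⁺_e - f_e)^{-1-α} - α (f_e - u⁻_e)^{-1-α}`. -/
def fgrad {E : Type} [Fintype E] (m : ℕ) (U Fstar : ℝ) (c lo hi f : E → ℝ) (e : E) : ℝ :=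
  20 * m * (fcost c f - Fstar)⁻¹ * c e
    + fAlpha m U * (hi e - f e) ^ (-1 - fAlpha m U)
    - fAlpha m U * (f e - lo e) ^ (-1 - fAlpha m U)

/-
Write `δ = f* - f`. The cost part of the gradient contributes `-20m` to `g(f)ᵀδ`. On each edge the
barrier part nearly cancels `α ℓ(f) |δ|`: moving towards a capacity, `δ` is at most the distance to
it, and slack times `slack^(-1-α)` is a barrier term, so the sum of the two is at most `2α` times
the barrier of the edge. Spending `α ℓ(f) |δ|` on the error of `g̃` and on `(α/4) |ℓ̃ δ|` costs
therefore at most `2α` times the total barrier. The potential bound and the lower bound on the gap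
make the total barrier `O(m log (mU)) = O(m/α)`, with constants for which this loss is below `m`.
-/

section PowBarrier

/-- The power barrier of the interval `[l, u]` at `x`, the contribution of one edge to `Φ`. -/
def powBarrier (α l u x : ℝ) : ℝ := (u - x) ^ (-α) + (x - l) ^ (-α)

/-- The length `ℓ` of one edge, i.e. the natural scale of the derivative of `powBarrier`. -/
def powBarrierLength (α l u x : ℝ) : ℝ := (u - x) ^ (-1 - α) + (x - l) ^ (-1 - α)

/-- The derivative of `powBarrier α l u` at a point `x` of the open interval, in closed form;
the barrier part of the gradient of `Φ`. -/
def powBarrierDeriv (α l u x : ℝ) : ℝ := α * (u - x) ^ (-1 - α) - α * (x - l) ^ (-1 - α)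

variable {α l u x y : ℝ}

theorem rpow_neg_one_sub_mul_self {a : ℝ} (ha : 0 < a) (α : ℝ) :
    a ^ (-1 - α) * a = a ^ (-α) := by
  rw [← Real.rpow_add_one ha.ne']
  ring_nf

theorem sub_mul_add_add_mul_abs_le {a b A B δ : ℝ} (hA : 0 ≤ A) (hB : 0 ≤ B)
    (hb : 0 ≤ b) (ha : 0 ≤ a) (hbδ : -b ≤ δ) (hδa : δ ≤ a) :
    (A - B) * δ + (A + B) * |δ| ≤ 2 * (A * a + B * b) := by
  have hAa : A * δ + A * |δ| ≤ 2 * (A * a) := by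
    rcases abs_cases δ with ⟨h, -⟩ | ⟨h, -⟩ <;> rw [h] <;> nlinarith [mul_nonneg hA ha]
  have hBb : -(B * δ) + B * |δ| ≤ 2 * (B * b) := by
    rcases abs_cases δ with ⟨h, -⟩ | ⟨h, -⟩ <;> rw [h] <;> nlinarith [mul_nonneg hB hb]
  linarith

theorem powBarrierDeriv_mul_sub_add_le (hα : 0 ≤ α) (hx : l < x ∧ x < u) (hy : l ≤ y ∧ y ≤ u) :
    powBarrierDeriv α l u x * (y - x) + α * (powBarrierLength α l u x * |y - x|)
      ≤ 2 * α * powBarrier α l u x := by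
  have hux : 0 < u - x := sub_pos.2 hx.2
  have hxl : 0 < x - l := sub_pos.2 hx.1
  have hslack := sub_mul_add_add_mul_abs_le (δ := y - x)
    (Real.rpow_nonneg hux.le (-1 - α)) (Real.rpow_nonneg hxl.le (-1 - α)) hxl.le hux.le
    (by linarith [hy.1]) (by linarith [hy.2])
  rw [rpow_neg_one_sub_mul_self hux, rpow_neg_one_sub_mul_self hxl] at hslack
  unfold powBarrierDeriv powBarrierLength powBarrier
  linarith [mul_le_mul_of_nonneg_left hslack hα]

theorem mul_sub_add_mul_abs_le {β ε κ q g w : ℝ} (hα : 0 ≤ α) (hβ : 0 ≤ β)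
    (hβε : ε + β * κ ≤ α) (hx : l < x ∧ x < u) (hy : l ≤ y ∧ y ≤ u)
    (hg : |g - (q + powBarrierDeriv α l u x)| ≤ ε * powBarrierLength α l u x)
    (hw : |w| ≤ κ * powBarrierLength α l u x) :
    g * (y - x) + β * |w * (y - x)| ≤ q * (y - x) + 2 * α * powBarrier α l u x := by
  set D := powBarrierDeriv α l u x
  set Λ := powBarrierLength α l u x
  have hΛ : 0 ≤ Λ := add_nonneg (Real.rpow_nonneg (sub_pos.2 hx.2).le _)
    (Real.rpow_nonneg (sub_pos.2 hx.1).le _)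
  have hgrad : (g - (q + D)) * (y - x) ≤ ε * Λ * |y - x| :=
    calc (g - (q + D)) * (y - x) ≤ |g - (q + D)| * |y - x| := (le_abs_self _).trans_eq (abs_mul _ _)
      _ ≤ ε * Λ * |y - x| := by gcongr
  have hlen : β * |w * (y - x)| ≤ β * (κ * Λ * |y - x|) := by
    rw [abs_mul]
    gcongr
  have hbudget : (ε + β * κ) * (Λ * |y - x|) ≤ α * (Λ * |y - x|) := by gcongr
  linarith [powBarrierDeriv_mul_sub_add_le hα hx hy]

theorem sum_mul_sub_add_mul_sum_abs_le {ι : Type*} [Fintype ι] {β ε κ : ℝ}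
    {lo hi q g w x y : ι → ℝ} (hα : 0 ≤ α) (hβ : 0 ≤ β) (hβε : ε + β * κ ≤ α)
    (hx : ∀ i, lo i < x i ∧ x i < hi i) (hy : ∀ i, lo i ≤ y i ∧ y i ≤ hi i)
    (hg : ∀ i, |g i - (q i + powBarrierDeriv α (lo i) (hi i) (x i))|
      ≤ ε * powBarrierLength α (lo i) (hi i) (x i))
    (hw : ∀ i, |w i| ≤ κ * powBarrierLength α (lo i) (hi i) (x i)) :
    ∑ i, g i * (y i - x i) + β * ∑ i, |w i * (y i - x i)|
      ≤ ∑ i, q i * (y i - x i) + 2 * α * ∑ i, powBarrier α (lo i) (hi i) (x i) := by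
  simp only [mul_sum, ← sum_add_distrib]
  exact sum_le_sum fun i _ => mul_sub_add_mul_abs_le hα hβ hβε (hx i) (hy i) (hg i) (hw i)

end PowBarrier

section Parameters

variable {m : ℕ} {U : ℝ}

theorem fAlpha_pos (hmU : 1 < m * U) : 0 < fAlpha m U :=
  one_div_pos.2 (mul_pos (by norm_num) (Real.log_pos hmU))

theorem fAlpha_mul_log (hmU : 1 < m * U) : fAlpha m U * Real.log (m * U) = 1 / 1000 := by
  have hlog : Real.log (m * U) ≠ 0 := (Real.log_pos hmU).ne'
  unfold fAlpha
  field_simp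

theorem fAlpha_le (hmU : Real.exp 1 ≤ m * U) : fAlpha m U ≤ 1 / 1000 := by
  have hlog : 1 ≤ Real.log (m * U) :=
    (Real.le_log_iff_exp_le ((Real.exp_pos 1).trans_le hmU)).2 hmU
  exact one_div_le_one_div_of_le (by norm_num) (by linarith)

theorem exp_one_le_mul {a b : ℝ} (ha : 2 ≤ a) (hb : 2 ≤ b) : Real.exp 1 ≤ a * b :=
  calc Real.exp 1 ≤ 2 * 2 := by linarith [Real.exp_one_lt_three]
    _ ≤ a * b := by gcongr

end Parameters

section Flow

variable {E : Type} [Fintype E] {c lo hi f : E → ℝ}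

theorem sum_mul_sub_eq_fcost_sub (c x y : E → ℝ) :
    ∑ e, c e * (y e - x e) = fcost c y - fcost c x := by
  simp only [fcost, mul_sub, sum_sub_distrib]

theorem sum_mul_inv_gap_mul_sub {x y : E → ℝ} (K : ℝ) (hxy : fcost c y < fcost c x) :
    ∑ e, K * (fcost c x - fcost c y)⁻¹ * c e * (y e - x e) = -K := by
  have hgap : fcost c x - fcost c y ≠ 0 := (sub_pos.2 hxy).ne'
  simp only [mul_assoc, ← mul_sum, sum_mul_sub_eq_fcost_sub]
  rw [← neg_sub (fcost c x), mul_neg, inv_mul_cancel₀ hgap, mul_neg_one]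

theorem sum_powBarrier_le_of_fPhi_le {m : ℕ} {U F K p : ℝ} (hmU : 0 < m * U)
    (hPhi : fPhi m U F c lo hi f ≤ K * m * Real.log (m * U))
    (hgap : (m * U) ^ (-p) ≤ fcost c f - F) :
    ∑ e, powBarrier (fAlpha m U) (lo e) (hi e) (f e) ≤ (K + 20 * p) * m * Real.log (m * U) := by
  have hlog_gap : -p * Real.log (m * U) ≤ Real.log (fcost c f - F) := by
    rw [← Real.log_rpow hmU]
    exact Real.log_le_log (Real.rpow_pos_of_pos hmU _) hgap
  have hcost : 20 * m * (-p * Real.log (m * U)) ≤ 20 * m * Real.log (fcost c f - F) := by gcongr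
  have hsplit : fPhi m U F c lo hi f = 20 * m * Real.log (fcost c f - F)
    + ∑ e, powBarrier (fAlpha m U) (lo e) (hi e) (f e) := rfl
  linarith

theorem fgrad_eq_add_powBarrierDeriv (m : ℕ) (U F : ℝ) (c lo hi f : E → ℝ) (e : E) :
    fgrad m U F c lo hi f e = 20 * m * (fcost c f - F)⁻¹ * c e
      + powBarrierDeriv (fAlpha m U) (lo e) (hi e) (f e) :=
  add_sub_assoc _ _ _

theorem stmt4_general {m : ℕ} {U ε : ℝ} {y g w : E → ℝ} (hmU : Real.exp 1 ≤ m * U)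
    (hy : ∀ e, lo e ≤ y e ∧ y e ≤ hi e) (hf : ∀ e, lo e < f e ∧ f e < hi e)
    (hPhi : fPhi m U (fcost c y) c lo hi f ≤ 200 * m * Real.log (m * U))
    (hgap : (m * U) ^ (-10 : ℝ) ≤ fcost c f - fcost c y)
    (hε : ε ≤ fAlpha m U / 2)
    (hg : ∀ e, |g e - fgrad m U (fcost c y) c lo hi f e| ≤ ε * flen m U lo hi f e)
    (hw : ∀ e, |w e| ≤ 2 * flen m U lo hi f e) :
    ∑ e, g e * (y e - f e) ≤ -(fAlpha m U / 4) * (100 * m + ∑ e, |w e * (y e - f e)|) := by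
  have hmU_one : 1 < m * U := (Real.one_lt_exp_iff.2 one_pos).trans_le hmU
  have hmU_pos : 0 < m * U := one_pos.trans hmU_one
  have hα : 0 < fAlpha m U := fAlpha_pos hmU_one
  have hcost_lt : fcost c y < fcost c f :=
    sub_pos.1 ((Real.rpow_pos_of_pos hmU_pos _).trans_le hgap)
  simp only [fgrad_eq_add_powBarrierDeriv] at hg
  have hmain := sum_mul_sub_add_mul_sum_abs_le (β := fAlpha m U / 4) (κ := 2) hα.le (by positivity)
    (by linarith) hf hy hg hw
  have hbarrier : 2 * fAlpha m U * ∑ e, powBarrier (fAlpha m U) (lo e) (hi e) (f e) ≤ 4 / 5 * m :=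
    calc _ ≤ 2 * fAlpha m U * ((200 + 20 * 10) * m * Real.log (m * U)) := by
          gcongr
          exact sum_powBarrier_le_of_fPhi_le hmU_pos hPhi hgap
      _ = 800 * m * (fAlpha m U * Real.log (m * U)) := by ring
      _ = 4 / 5 * m := by rw [fAlpha_mul_log hmU_one]; ring
  have hαm : fAlpha m U * m ≤ 1 / 1000 * m := by gcongr; exact fAlpha_le hmU
  rw [sum_mul_inv_gap_mul_sub _ hcost_lt] at hmain
  linarith [m.cast_nonneg (α := ℝ)]

end Flow

/-- quality of `f* - f`: the straight line to the optimum is a good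
solution to the min-ratio cycle problem. -/
theorem stmt4
    {V E : Type} [Fintype V] [Fintype E] [DecidableEq V]
    (tail head : E → V)
    (m : ℕ) (hmcard : m = Fintype.card E) (hm : 2 ≤ m)
    (U : ℝ) (hU : 2 ≤ U)
    (d : V → ℝ) (c lo hi : E → ℝ)
    (hcap : ∀ e, -U ≤ lo e ∧ lo e < hi e ∧ hi e ≤ U)
    (Fstar : ℝ) (fstar : E → ℝ)
    (hfstarFeas : IsFeasible tail head d lo hi fstar)
    (hfstarCost : fcost c fstar = Fstar)
    (hfstarOpt : ∀ f', IsFeasible tail head d lo hi f' → Fstar ≤ fcost c f')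
    (f : E → ℝ)
    (hfd : ∀ v, excess tail head f v = d v)
    (hfs : ∀ e, lo e < f e ∧ f e < hi e)
    (hPhi : fPhi m U Fstar c lo hi f ≤ 200 * m * Real.log (m * U))
    (hgap : ((m : ℝ) * U) ^ (-10 : ℝ) ≤ fcost c f - Fstar)
    (ε : ℝ) (hε : 0 < ε ∧ ε < fAlpha m U / 2)
    (gtil : E → ℝ)
    (hg : ∀ e, |gtil e - fgrad m U Fstar c lo hi f e| ≤ ε * flen m U lo hi f e)
    (ltil : E → ℝ) (hlpos : ∀ e, 0 < ltil e)
    (hl : ∀ e, flen m U lo hi f e / 2 ≤ ltil e ∧ ltil e ≤ 2 * flen m U lo hi f e) :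
    ∑ e, gtil e * (fstar e - f e)
      ≤ -(fAlpha m U / 4) * (100 * m + ∑ e, |ltil e * (fstar e - f e)|) := by
  subst hfstarCost
  exact stmt4_general (exp_one_le_mul (by exact_mod_cast hm) hU) hfstarFeas.2 hfs hPhi hgap hε.2.le
    hg fun e => (abs_of_pos (hlpos e)).trans_le (hl e).2
end
end

section
/- Let f be strictly feasible with c^⊤f > F*. Let g̃ ∈ ℝ^E satisfy ‖L(f)^{−1}(g̃ − g(f))‖_∞ ≤ ε for some ε ∈ (0, 1/2], and let ℓ̃ ∈ ℝ^E_{>0} satisfy ℓ̃ ≈₂ ℓ(f); write L̃ = diag(ℓ̃). Let Δ ∈ ℝ^E be a circulation with g̃^⊤Δ ≤ −κ·‖L̃Δ‖₁ for some κ ∈ (0,1). Then |c^⊤Δ| / (c^⊤f − F*) ≤ |g̃^⊤Δ| / (κ·m). -/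
open Finset

noncomputable section

/-!
The gradient is `20 m (cᵀf - F*)⁻¹ c` plus a barrier term bounded entrywise by `α ℓ(f)`, so `g̃`
lies within `2 (ε + α) ℓ̃` of `20 m (cᵀf - F*)⁻¹ c`, and `g̃ᵀΔ` differs from
`20 m cᵀΔ / (cᵀf - F*)` by at most `2 (ε + α) ‖L̃Δ‖₁`. The ratio hypothesis bounds `‖L̃Δ‖₁` by
`|g̃ᵀΔ| / κ`, whence `20 m |cᵀΔ| / (cᵀf - F*) ≤ (κ + 2 (ε + α)) |g̃ᵀΔ| / κ`, and
`κ + 2 (ε + α) ≤ 20`.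
-/

section WeightedSums

variable {ι R : Type*} [CommRing R] [LinearOrder R] [IsStrictOrderedRing R]
  {s : Finset ι} {g h ℓ x : ι → R} {δ κ : R}

lemma abs_sum_mul_sub_sum_mul_le (hδ : 0 ≤ δ) (hgh : ∀ i ∈ s, |g i - h i| ≤ δ * ℓ i) :
    |∑ i ∈ s, g i * x i - ∑ i ∈ s, h i * x i| ≤ δ * ∑ i ∈ s, |ℓ i * x i| := by
  simp only [← sum_sub_distrib, ← sub_mul, mul_sum]
  refine (abs_sum_le_sum_abs _ _).trans (sum_le_sum fun i hi => ?_)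
  calc |(g i - h i) * x i| = |g i - h i| * |x i| := abs_mul _ _
    _ ≤ δ * ℓ i * |x i| := by gcongr; exact hgh i hi
    _ ≤ δ * |ℓ i| * |x i| := by gcongr; exact le_abs_self _
    _ = δ * |ℓ i * x i| := by rw [abs_mul, mul_assoc]

lemma mul_abs_sum_mul_le_of_sum_mul_le_neg (hδ : 0 ≤ δ) (hκ : 0 ≤ κ)
    (hgh : ∀ i ∈ s, |g i - h i| ≤ δ * ℓ i)
    (hx : ∑ i ∈ s, g i * x i ≤ -κ * ∑ i ∈ s, |ℓ i * x i|) :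
    κ * |∑ i ∈ s, h i * x i| ≤ (κ + δ) * |∑ i ∈ s, g i * x i| := by
  have hdiff : |∑ i ∈ s, h i * x i| ≤ |∑ i ∈ s, g i * x i| + δ * ∑ i ∈ s, |ℓ i * x i| := by
    linarith [abs_sub_abs_le_abs_sub (∑ i ∈ s, h i * x i) (∑ i ∈ s, g i * x i),
      abs_sub_comm (∑ i ∈ s, h i * x i) (∑ i ∈ s, g i * x i),
      abs_sum_mul_sub_sum_mul_le (x := x) hδ hgh]
  have hlength : κ * ∑ i ∈ s, |ℓ i * x i| ≤ |∑ i ∈ s, g i * x i| := by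
    linarith [neg_abs_le (∑ i ∈ s, g i * x i)]
  calc κ * |∑ i ∈ s, h i * x i|
      ≤ κ * (|∑ i ∈ s, g i * x i| + δ * ∑ i ∈ s, |ℓ i * x i|) := by gcongr
    _ = κ * |∑ i ∈ s, g i * x i| + δ * (κ * ∑ i ∈ s, |ℓ i * x i|) := by ring
    _ ≤ κ * |∑ i ∈ s, g i * x i| + δ * |∑ i ∈ s, g i * x i| := by gcongr
    _ = (κ + δ) * |∑ i ∈ s, g i * x i| := by ring

end WeightedSums

section Barrier

variable {m : ℕ} {U : ℝ}

lemma fAlpha_nonneg (hmU : 1 ≤ m * U) : 0 ≤ fAlpha m U :=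
  one_div_nonneg.2 (mul_nonneg (by norm_num) (Real.log_nonneg hmU))

lemma fAlpha_le_one (hmU : 2 ≤ m * U) : fAlpha m U ≤ 1 := by
  have hlog : Real.log 2 ≤ Real.log (m * U) := Real.log_le_log two_pos hmU
  have hone : 1 ≤ 1000 * Real.log (m * U) := by linarith [Real.log_two_gt_d9]
  rw [fAlpha, one_div]
  exact inv_le_one_of_one_le₀ hone

lemma abs_fgrad_sub_cost_le {E : Type} [Fintype E] {Fstar : ℝ} {c lo hi f : E → ℝ} {e : E}
    (hα : 0 ≤ fAlpha m U) (hlo : lo e ≤ f e) (hhi : f e ≤ hi e) :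
    |fgrad m U Fstar c lo hi f e - 20 * m * (fcost c f - Fstar)⁻¹ * c e|
      ≤ fAlpha m U * flen m U lo hi f e := by
  have hupper : 0 ≤ (hi e - f e) ^ (-1 - fAlpha m U) := Real.rpow_nonneg (sub_nonneg.2 hhi) _
  have hlower : 0 ≤ (f e - lo e) ^ (-1 - fAlpha m U) := Real.rpow_nonneg (sub_nonneg.2 hlo) _
  calc |fgrad m U Fstar c lo hi f e - 20 * m * (fcost c f - Fstar)⁻¹ * c e|
      = |fAlpha m U * ((hi e - f e) ^ (-1 - fAlpha m U) - (f e - lo e) ^ (-1 - fAlpha m U))| := by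
        rw [fgrad]; ring_nf
    _ = fAlpha m U * |(hi e - f e) ^ (-1 - fAlpha m U) - (f e - lo e) ^ (-1 - fAlpha m U)| := by
        rw [abs_mul, abs_of_nonneg hα]
    _ ≤ fAlpha m U * flen m U lo hi f e := by
        rw [flen]
        gcongr
        exact abs_sub_le_iff.2 ⟨by linarith, by linarith⟩

lemma abs_sub_cost_le_of_abs_sub_fgrad_le {E : Type} [Fintype E] {Fstar : ℝ}
    {c lo hi f gtil ltil : E → ℝ} {e : E} {β ε : ℝ}
    (hα : 0 ≤ fAlpha m U) (hlo : lo e ≤ f e) (hhi : f e ≤ hi e) (hε : 0 ≤ ε)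
    (hg : |gtil e - fgrad m U Fstar c lo hi f e| ≤ ε * flen m U lo hi f e)
    (hl : flen m U lo hi f e ≤ β * ltil e) :
    |gtil e - 20 * m * (fcost c f - Fstar)⁻¹ * c e| ≤ β * (ε + fAlpha m U) * ltil e :=
  calc |gtil e - 20 * m * (fcost c f - Fstar)⁻¹ * c e|
      ≤ |gtil e - fgrad m U Fstar c lo hi f e|
        + |fgrad m U Fstar c lo hi f e - 20 * m * (fcost c f - Fstar)⁻¹ * c e| :=
        abs_sub_le _ _ _
    _ ≤ ε * flen m U lo hi f e + fAlpha m U * flen m U lo hi f e :=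
        add_le_add hg (abs_fgrad_sub_cost_le hα hlo hhi)
    _ = (ε + fAlpha m U) * flen m U lo hi f e := by ring
    _ ≤ (ε + fAlpha m U) * (β * ltil e) := by gcongr
    _ = β * (ε + fAlpha m U) * ltil e := by ring

end Barrier

theorem stmt5_general {E : Type} [Fintype E] {m : ℕ} {U Fstar : ℝ} (hmU : 1 < m * U)
    {c lo hi f : E → ℝ} (hfs : ∀ e, lo e < f e ∧ f e < hi e) (hfc : Fstar < fcost c f)
    {β ε κ : ℝ} (hβ : 0 ≤ β) (hε : 0 ≤ ε) (hκ : 0 < κ)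
    (hconst : κ + β * (ε + fAlpha m U) ≤ 20) {gtil ltil Δ : E → ℝ}
    (hg : ∀ e, |gtil e - fgrad m U Fstar c lo hi f e| ≤ ε * flen m U lo hi f e)
    (hl : ∀ e, flen m U lo hi f e ≤ β * ltil e)
    (hΔg : ∑ e, gtil e * Δ e ≤ -κ * ∑ e, |ltil e * Δ e|) :
    |∑ e, c e * Δ e| / (fcost c f - Fstar) ≤ |∑ e, gtil e * Δ e| / (κ * m) := by
  have hα : 0 ≤ fAlpha m U := fAlpha_nonneg hmU.le
  have hm : 0 < m := Nat.pos_of_ne_zero (by rintro rfl; norm_num at hmU)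
  have hcost : κ * |∑ e, 20 * m * (fcost c f - Fstar)⁻¹ * c e * Δ e|
      ≤ (κ + β * (ε + fAlpha m U)) * |∑ e, gtil e * Δ e| :=
    mul_abs_sum_mul_le_of_sum_mul_le_neg (by positivity) hκ.le
      (fun e _ => abs_sub_cost_le_of_abs_sub_fgrad_le hα (hfs e).1.le (hfs e).2.le hε (hg e) (hl e))
      hΔg
  have hscale : 0 ≤ 20 * m * (fcost c f - Fstar)⁻¹ :=
    mul_nonneg (by positivity) (inv_nonneg.2 (sub_nonneg.2 hfc.le))
  have hfactor : |∑ e, 20 * m * (fcost c f - Fstar)⁻¹ * c e * Δ e|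
      = 20 * m * (|∑ e, c e * Δ e| / (fcost c f - Fstar)) := by
    simp only [mul_assoc _ (c _), ← mul_sum]
    rw [abs_mul, abs_of_nonneg hscale, mul_assoc, inv_mul_eq_div]
  have hbound : (κ + β * (ε + fAlpha m U)) * |∑ e, gtil e * Δ e| ≤ 20 * |∑ e, gtil e * Δ e| := by
    gcongr
  rw [le_div_iff₀ (by positivity)]
  rw [hfactor] at hcost
  linarith

/-- residual stability: for an approximate min-ratio circulation `Δ`,
`|cᵀΔ| / (cᵀf - F*) ≤ |g̃ᵀΔ| / (κ m)`. -/
theorem stmt5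
    {V E : Type} [Fintype V] [Fintype E] [DecidableEq V]
    (tail head : E → V)
    (m : ℕ) (hmcard : m = Fintype.card E) (hm : 2 ≤ m)
    (U : ℝ) (hU : 2 ≤ U)
    (d : V → ℝ) (c lo hi : E → ℝ)
    (hcap : ∀ e, -U ≤ lo e ∧ lo e < hi e ∧ hi e ≤ U)
    (Fstar : ℝ)
    (hFstar : ∃ f0, IsFeasible tail head d lo hi f0 ∧ fcost c f0 = Fstar ∧
      ∀ f', IsFeasible tail head d lo hi f' → Fstar ≤ fcost c f')
    (f : E → ℝ)
    (hfd : ∀ v, excess tail head f v = d v)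
    (hfs : ∀ e, lo e < f e ∧ f e < hi e)
    (hfc : Fstar < fcost c f)
    (ε : ℝ) (hε : 0 < ε ∧ ε ≤ 1 / 2)
    (gtil : E → ℝ)
    (hg : ∀ e, |gtil e - fgrad m U Fstar c lo hi f e| ≤ ε * flen m U lo hi f e)
    (ltil : E → ℝ) (hlpos : ∀ e, 0 < ltil e)
    (hl : ∀ e, flen m U lo hi f e / 2 ≤ ltil e ∧ ltil e ≤ 2 * flen m U lo hi f e)
    (κ : ℝ) (hκ : 0 < κ ∧ κ < 1)
    (Δ : E → ℝ) (hΔcirc : ∀ v, excess tail head Δ v = 0)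
    (hΔg : ∑ e, gtil e * Δ e ≤ -κ * ∑ e, |ltil e * Δ e|) :
    |∑ e, c e * Δ e| / (fcost c f - Fstar) ≤ |∑ e, gtil e * Δ e| / (κ * m) := by
  have hmU : 2 ≤ m * U := by nlinarith [show (2 : ℝ) ≤ m by exact_mod_cast hm]
  exact stmt5_general (β := 2) (by linarith) hfs hfc zero_le_two hε.1.le hκ.1
    (by linarith [fAlpha_le_one hmU]) hg (fun e => by linarith [(hl e).1]) hΔg
end
end

section
/- (Initial point.) Let I = (G, d, c, u⁻, u⁺) be a min-cost flow instance on a directed graph G = (V,E) with n vertices and m ≥ 2 edges, with integral d ∈ {−U,…,U}^V satisfying Σ_v d_v = 0 and integral c, u⁻, u⁺ ∈ {−U,…,U}^E with u⁻_e < u⁺_e for all e, where U ≥ 2 is an integer. Then there exist: a directed graph G̃ with vertex set V ∪ {v*} (v* a new vertex) and edge set E ∪ E′ with |E′| ≤ n, where every edge of E′ has v* as an endpoint; integral data d̃ ∈ ℤ^{V∪{v*}} with ‖d̃‖_∞ ≤ 2mU and c̃, ũ⁻, ũ⁺ ∈ ℤ^{E∪E′} with all entries bounded by 4mU² in absolute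 value, agreeing with c, u⁻, u⁺ on E; and a flow f^init ∈ ℝ^{E∪E′} with B̃^⊤f^init = d̃ and ũ⁻_e < f^init_e < ũ⁺_e for all e, such that (a) Φ_Ĩ(f^init) ≤ 200·m̃·log(m̃·Ũ), where m̃ := |E ∪ E′|, Ũ := 4mU², and Φ_Ĩ is the potential of the instance Ĩ = (G̃, d̃, c̃, ũ⁻, ũ⁺) with parameter α̃ := 1/(1000·log(m̃Ũ)); and (b) if I admits a feasible flow, then every flow f̃ that is optimal for Ĩ satisfies f̃_e = 0 for all e ∈ E′, and the restriction of f̃ to E is an optimal flow for I. -/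
open Finset

noncomputable section

/-!
Start from the flow `f` halfway between the capacities: integrality keeps it `1/2` away from every
capacity. Connect each vertex whose demand `f` does not serve exactly to the new vertex `v*` by an
edge, oriented so as to carry the missing amount, with lower capacity `0` and upper capacity twice
that amount. The midpoint flow of the extended instance then routes the demand, every barrier term
is at most `2`, and its cost exceeds the optimum by at most `(m̃ Ũ)²`, so the potential is
`O(m̃ log (m̃ Ũ))`.

The costs `4mU²` of the new edges are an exact penalty. If an optimal flow sends `δ` units through
the new edges, its restriction to the original graph misses the demand by at most `δ` in `ℓ¹`, so
by Hoffman's error bound there is a feasible flow of the original instance that differs from the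
restriction by at most `δ` on each edge, hence costs at most `mUδ` more. Optimality forces `δ = 0`.
-/

section Excess

variable {V E : Type} [Fintype E] [DecidableEq V] (tail head : E → V)

lemma excess_add (f g : E → ℝ) :
    excess tail head (f + g) = excess tail head f + excess tail head g := by
  ext v
  simp only [excess, Pi.add_apply, add_mul, sum_add_distrib]

lemma excess_sub (f g : E → ℝ) :
    excess tail head (f - g) = excess tail head f - excess tail head g := by
  ext v
  simp only [excess, Pi.sub_apply, sub_mul, sum_sub_distrib]

lemma excess_smul (a : ℝ) (f : E → ℝ) :
    excess tail head (a • f) = a • excess tail head f := by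
  ext v
  simp only [excess, Pi.smul_apply, smul_eq_mul, mul_assoc, mul_sum]

lemma excess_single [DecidableEq E] (e : E) (a : ℝ) :
    excess tail head (Pi.single e a) = Pi.single (tail e) a - Pi.single (head e) a := by
  ext v
  simp only [excess, Pi.single_apply, Pi.sub_apply, ite_mul, zero_mul, sum_ite_eq', mem_univ,
    if_true]
  simp only [mul_sub, mul_ite, mul_one, mul_zero, eq_comm (a := v)]

lemma continuous_excess : Continuous (excess tail head) := by
  unfold excess
  fun_prop

lemma excess_piecewise (s : Set E) [DecidablePred (· ∈ s)] (f : E → ℝ) :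
    excess (s.piecewise tail head) (s.piecewise head tail) f
      = excess tail head (s.piecewise f (-f)) := by
  ext v
  refine sum_congr rfl fun e _ => ?_
  by_cases he : e ∈ s
  · simp [he]
  · simp only [he, not_false_eq_true, Set.piecewise_eq_of_notMem, Pi.neg_apply]
    ring

lemma sum_excess (f : E → ℝ) (S : Finset V) :
    ∑ v ∈ S, excess tail head f v
      = ∑ e, f e * ((if tail e ∈ S then 1 else 0) - (if head e ∈ S then 1 else 0)) := by
  simp only [excess]
  rw [sum_comm]
  simp only [← mul_sum, sum_sub_distrib, sum_ite_eq]

lemma sum_univ_excess [Fintype V] (f : E → ℝ) : ∑ v, excess tail head f v = 0 := by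
  simp [sum_excess]

end Excess

section Circulation

variable {V E : Type} [Fintype E] [DecidableEq V] {tail head : E → V}

lemma exists_excess_eq_single_sub_single_of_reflTransGen {T : Set E} {u v : V}
    (huv : Relation.ReflTransGen (fun a b => ∃ e ∈ T, tail e = a ∧ head e = b) u v) :
    ∃ h : E → ℝ, 0 ≤ h ∧ Function.support h ⊆ T ∧
      excess tail head h = Pi.single u 1 - Pi.single v 1 := by
  classical
  induction huv with
  | refl => exact ⟨0, le_rfl, by simp, by ext; simp [excess]⟩
  | tail _ hstep ih =>
    obtain ⟨h, h_nonneg, h_supp, h_excess⟩ := ih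
    obtain ⟨e, heT, rfl, rfl⟩ := hstep
    refine ⟨h + Pi.single e 1, add_nonneg h_nonneg (Pi.single_nonneg.2 zero_le_one), ?_, ?_⟩
    · refine (Function.support_add h _).trans (Set.union_subset h_supp ?_)
      exact Pi.support_single_subset.trans (Set.singleton_subset_iff.2 heT)
    · rw [excess_add, excess_single, h_excess, sub_add_sub_cancel]

lemma exists_pos_smul_le {ι : Type*} [Finite ι] {x y : ι → ℝ} (hy : 0 ≤ y)
    (hxy : Function.support x ⊆ Function.support y) : ∃ t : ℝ, 0 < t ∧ t • x ≤ y := by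
  have hsmall : ∀ᶠ t in nhdsWithin (0 : ℝ) (Set.Ioi 0), ∀ i, t * x i ≤ y i := by
    refine Filter.eventually_all.2 fun i => ?_
    rcases (hy i).eq_or_lt with hi | hi
    · have hxi : x i = 0 := Function.notMem_support.1 fun h => hxy h hi.symm
      exact .of_forall fun t => by rw [hxi, mul_zero, ← hi, Pi.zero_apply]
    · have hlim : Filter.Tendsto (fun t : ℝ => t * x i) (nhdsWithin 0 (Set.Ioi 0)) (nhds 0) :=
        ((continuous_mul_const (x i)).tendsto' 0 0 (zero_mul _)).mono_left nhdsWithin_le_nhds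
      exact (hlim.eventually_lt_const hi).mono fun _ => le_of_lt
  obtain ⟨t, ht, ht0⟩ := (hsmall.and self_mem_nhdsWithin).exists
  exact ⟨t, ht0, ht⟩

lemma le_neg_sum_excess_of_closed {w : E → ℝ} (hw : 0 ≤ w) {S : Finset V}
    (hS : ∀ e ∈ Function.support w, tail e ∈ S → head e ∈ S) {e₀ : E}
    (htail : tail e₀ ∉ S) (hhead : head e₀ ∈ S) :
    w e₀ ≤ -∑ v ∈ S, excess tail head w v := by
  have hterm : ∀ e, 0 ≤
      w e * ((if head e ∈ S then 1 else 0) - (if tail e ∈ S then 1 else 0)) := by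
    intro e
    by_cases he : w e = 0
    · simp [he]
    · have := hS e he
      exact mul_nonneg (hw e) (by split_ifs <;> simp_all)
  calc w e₀ = w e₀ * ((if head e₀ ∈ S then 1 else 0) - (if tail e₀ ∈ S then 1 else 0)) := by
        simp [htail, hhead]
    _ ≤ ∑ e, w e * ((if head e ∈ S then 1 else 0) - (if tail e ∈ S then 1 else 0)) :=
        single_le_sum (fun e _ => hterm e) (mem_univ e₀)
    _ = -∑ v ∈ S, excess tail head w v := by
        rw [sum_excess, ← sum_neg_distrib]
        exact sum_congr rfl fun e _ => by ring

lemma le_sum_abs_excess_or_exists_circulation [Fintype V] {w : E → ℝ} (hw : 0 ≤ w) (e₀ : E) :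
    w e₀ ≤ ∑ v, |excess tail head w v| ∨
      ∃ C : E → ℝ, 0 ≤ C ∧ C ≤ w ∧ 0 < C e₀ ∧ excess tail head C = 0 := by
  classical
  rcases (hw e₀).eq_or_lt with h₀ | h₀
  · exact .inl (h₀.symm.trans_le (sum_nonneg fun _ _ => abs_nonneg _))
  let Reach := Relation.ReflTransGen
    (fun a b => ∃ e ∈ Function.support w, tail e = a ∧ head e = b) (head e₀)
  by_cases hcycle : Reach (tail e₀)
  · right
    obtain ⟨h, h_nonneg, h_supp, h_excess⟩ :=
      exists_excess_eq_single_sub_single_of_reflTransGen hcycle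
    have hsingle : (0 : E → ℝ) ≤ Pi.single e₀ 1 := Pi.single_nonneg.2 zero_le_one
    have hsupp : Function.support (h + Pi.single e₀ 1) ⊆ Function.support w :=
      (Function.support_add h _).trans <| Set.union_subset h_supp <|
        Pi.support_single_subset.trans (Set.singleton_subset_iff.2 h₀.ne')
    obtain ⟨t, ht, htw⟩ := exists_pos_smul_le hw hsupp
    refine ⟨t • (h + Pi.single e₀ 1), smul_nonneg ht.le (add_nonneg h_nonneg hsingle), htw,
      mul_pos ht ?_, ?_⟩
    · simpa using add_pos_of_nonneg_of_pos (h_nonneg e₀) one_pos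
    · rw [excess_smul, excess_add, excess_single, h_excess, sub_add_sub_cancel, sub_self,
        smul_zero]
  · left
    calc w e₀ ≤ -∑ v with Reach v, excess tail head w v :=
          le_neg_sum_excess_of_closed hw
            (fun e he htail => by
              simp only [mem_filter, mem_univ, true_and] at htail ⊢
              exact htail.tail ⟨e, he, rfl, rfl⟩)
            (by simpa using hcycle) (by simpa using Relation.ReflTransGen.refl)
      _ ≤ ∑ v with Reach v, |excess tail head w v| :=
          (neg_le_abs _).trans (abs_sum_le_sum_abs _ _)
      _ ≤ ∑ v, |excess tail head w v| :=
          sum_le_univ_sum_of_nonneg fun _ => abs_nonneg _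

theorem abs_le_sum_abs_excess_or_exists_conformal_circulation [Fintype V] (w : E → ℝ) (e₀ : E) :
    |w e₀| ≤ ∑ v, |excess tail head w v| ∨
      ∃ C : E → ℝ, (∀ e, C e ∈ Set.uIcc 0 (w e)) ∧ C e₀ ≠ 0 ∧ excess tail head C = 0 := by
  classical
  let s : Set E := {e | 0 ≤ w e}
  have hsigned : s.piecewise |w| (-|w|) = w := by
    ext e
    by_cases he : 0 ≤ w e
    · simp [s, he]
    · simp [s, he, abs_of_neg (not_le.1 he)]
  have horient := le_sum_abs_excess_or_exists_circulation (tail := s.piecewise tail head)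
    (head := s.piecewise head tail) (abs_nonneg w) e₀
  simp only [excess_piecewise, hsigned, Pi.abs_apply] at horient
  refine horient.imp_right ?_
  rintro ⟨C, hC_nonneg, hC_le, hC_pos, hC_excess⟩
  refine ⟨s.piecewise C (-C), fun e => ?_, ?_, hC_excess⟩
  · have hCe : C e ≤ |w e| := hC_le e
    have hCe' : 0 ≤ C e := hC_nonneg e
    by_cases he : 0 ≤ w e
    · rw [Set.piecewise_eq_of_mem s _ _ he, Set.uIcc_of_le he]
      exact ⟨hCe', hCe.trans_eq (abs_of_nonneg he)⟩
    · rw [Set.piecewise_eq_of_notMem s _ _ he, Set.uIcc_of_ge (not_le.1 he).le]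
      rw [abs_of_neg (not_le.1 he)] at hCe
      exact ⟨le_neg_of_le_neg hCe, neg_nonpos.2 hCe'⟩
  · by_cases he : e₀ ∈ s <;> simp [he, hC_pos.ne']

end Circulation

section ErrorBound

variable {V E : Type} [Fintype E] [DecidableEq V] {tail head : E → V}

lemma isCompact_setOf_isFeasible (tail head : E → V) (d : V → ℝ) (lo hi : E → ℝ) :
    IsCompact {f | IsFeasible tail head d lo hi f} := by
  have hset : {f | IsFeasible tail head d lo hi f}
      = Set.Icc lo hi ∩ excess tail head ⁻¹' {d} := by
    ext f
    simp only [IsFeasible, Set.mem_ofPred_eq, Set.mem_inter_iff, Set.mem_Icc, Pi.le_def,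
      Set.mem_preimage, Set.mem_singleton_iff, funext_iff, forall_and]
    exact and_comm
  rw [hset]
  exact isCompact_Icc.inter_right (isClosed_singleton.preimage (continuous_excess tail head))

lemma abs_sub_eq_of_mem_uIcc_zero {a b : ℝ} (hb : b ∈ Set.uIcc 0 a) : |a - b| = |a| - |b| := by
  rcases Set.mem_uIcc.1 hb with ⟨h0, hba⟩ | ⟨hab, h0⟩
  · rw [abs_of_nonneg (sub_nonneg.2 hba), abs_of_nonneg (h0.trans hba), abs_of_nonneg h0]
  · rw [abs_of_nonpos (sub_nonpos.2 hab), abs_of_nonpos (hab.trans h0), abs_of_nonpos h0]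
    ring

lemma IsFeasible.sub_circulation {d : V → ℝ} {lo hi g p C : E → ℝ}
    (hg : IsFeasible tail head d lo hi g) (hp : ∀ e, lo e ≤ p e ∧ p e ≤ hi e)
    (hC : ∀ e, C e ∈ Set.uIcc 0 (g e - p e)) (hC_excess : excess tail head C = 0) :
    IsFeasible tail head d lo hi (g - C) := by
  refine ⟨fun v => by rw [excess_sub, hC_excess, sub_zero, hg.1 v], fun e => ?_⟩
  obtain ⟨hlo_p, hp_hi⟩ := hp e
  obtain ⟨hlo_g, hg_hi⟩ := hg.2 e
  rw [Pi.sub_apply]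
  rcases Set.mem_uIcc.1 (hC e) with ⟨h, h'⟩ | ⟨h, h'⟩ <;> constructor <;> linarith

/- Hoffman's error bound for flows: in a feasible `g` that is `ℓ¹`-closest to `p`, the difference
`g - p` contains no cycle, so all of it is accounted for by its excesses. -/
theorem exists_isFeasible_forall_abs_sub_le [Fintype V] {d : V → ℝ} {lo hi p : E → ℝ}
    (hne : ∃ f, IsFeasible tail head d lo hi f) (hp : ∀ e, lo e ≤ p e ∧ p e ≤ hi e) :
    ∃ g, IsFeasible tail head d lo hi g ∧
      ∀ e, |g e - p e| ≤ ∑ v, |d v - excess tail head p v| := by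
  obtain ⟨g, hg, hmin⟩ := (isCompact_setOf_isFeasible tail head d lo hi).exists_isMinOn hne
    (f := fun g => ∑ e, |g e - p e|) (by fun_prop)
  refine ⟨g, hg, fun e₀ => ?_⟩
  rcases abs_le_sum_abs_excess_or_exists_conformal_circulation (tail := tail) (head := head)
    (g - p) e₀ with hbound | ⟨C, hC, hC₀, hC_excess⟩
  · simpa only [excess_sub, Pi.sub_apply, hg.1] using hbound
  · exfalso
    have hdist : ∀ e, |(g - C) e - p e| = |g e - p e| - |C e| := fun e => by
      rw [Pi.sub_apply, sub_right_comm]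
      exact abs_sub_eq_of_mem_uIcc_zero (hC e)
    have hcloser : ∑ e, |(g - C) e - p e| < ∑ e, |g e - p e| := by
      refine sum_lt_sum (fun e _ => ?_) ⟨e₀, mem_univ _, ?_⟩ <;> rw [hdist]
      · exact sub_le_self _ (abs_nonneg _)
      · exact sub_lt_self _ (abs_pos.2 hC₀)
    exact hcloser.not_ge (hmin (hg.sub_circulation hp hC hC_excess))

end ErrorBound

section Cost

lemma fcost_sub_le {E : Type} [Fintype E] (c f g : E → ℝ) :
    fcost c f - fcost c g ≤ ∑ e, |c e| * |f e - g e| := by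
  rw [fcost, fcost, ← sum_sub_distrib]
  refine sum_le_sum fun e _ => ?_
  rw [← mul_sub, ← abs_mul]
  exact le_abs_self _

lemma fcost_sum {E J : Type} [Fintype E] [Fintype J] (c f : E ⊕ J → ℝ) :
    fcost c f = fcost (fun e => c (.inl e)) (fun e => f (.inl e))
      + fcost (fun j => c (.inr j)) (fun j => f (.inr j)) :=
  Fintype.sum_sum_type _

variable {V E : Type} [Fintype E] [DecidableEq V]

/-- Optimality of a flow for the min-cost flow instance. -/
def IsOptimal (tail head : E → V) (d : V → ℝ) (c lo hi f : E → ℝ) : Prop :=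
  IsFeasible tail head d lo hi f ∧ ∀ g, IsFeasible tail head d lo hi g → fcost c f ≤ fcost c g

/-- The optimal value `F*` of a min-cost flow instance; by the convention for `sInf` on `ℝ` it is
`0` for an infeasible instance. -/
def optimalValue (tail head : E → V) (d : V → ℝ) (c lo hi : E → ℝ) : ℝ :=
  sInf {x | ∃ g, IsFeasible tail head d lo hi g ∧ fcost c g = x}

lemma IsFeasible.fcost_sub_optimalValue_mem_Icc {tail head : E → V} {d : V → ℝ}
    {lo hi f : E → ℝ} (hf : IsFeasible tail head d lo hi f) (c : E → ℝ) :
    fcost c f - optimalValue tail head d c lo hi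
      ∈ Set.Icc 0 (∑ e, |c e| * (hi e - lo e)) := by
  have hlower : ∀ x ∈ {x | ∃ g, IsFeasible tail head d lo hi g ∧ fcost c g = x},
      fcost c f - ∑ e, |c e| * (hi e - lo e) ≤ x := by
    rintro _ ⟨g, hg, rfl⟩
    refine sub_le_comm.1 ((fcost_sub_le c f g).trans (sum_le_sum fun e _ => ?_))
    gcongr
    obtain ⟨hlo_f, hf_hi⟩ := hf.2 e
    obtain ⟨hlo_g, hg_hi⟩ := hg.2 e
    rw [abs_le]
    constructor <;> linarith
  exact ⟨sub_nonneg.2 (csInf_le ⟨_, hlower⟩ ⟨f, hf, rfl⟩),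
    sub_le_comm.1 (le_csInf ⟨_, f, hf, rfl⟩ hlower)⟩

end Cost

section Star

variable {V E J : Type} (tail head : E → V) (x : J → V) (s : Set J) [DecidablePred (· ∈ s)]

/-- Tail map of the star extension of a graph: a new vertex `v* = Sum.inr ()` is added, together
with an edge between `x j` and `v*` for each `j`. That edge points towards `v*` when `j ∈ s` and
away from `v*` otherwise. -/
def starTail : E ⊕ J → V ⊕ Unit :=
  Sum.elim (Sum.inl ∘ tail) (s.piecewise (Sum.inl ∘ x) fun _ => Sum.inr ())

/-- Head map of the star extension of a graph, see `starTail`. -/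
def starHead : E ⊕ J → V ⊕ Unit :=
  Sum.elim (Sum.inl ∘ head) (s.piecewise (fun _ => Sum.inr ()) (Sum.inl ∘ x))

lemma starTail_inr_or_starHead_inr (j : J) :
    starTail tail x s (.inr j) = .inr () ∨ starHead head x s (.inr j) = .inr () := by
  by_cases hj : j ∈ s <;> simp [starTail, starHead, hj]

variable [Fintype E] [Fintype J] [DecidableEq V]

lemma excess_sumElim {W : Type} [DecidableEq W] (t₁ h₁ : E → W) (t₂ h₂ : J → W)
    (f : E ⊕ J → ℝ) :
    excess (Sum.elim t₁ t₂) (Sum.elim h₁ h₂) f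
      = excess t₁ h₁ (fun e => f (.inl e)) + excess t₂ h₂ (fun j => f (.inr j)) := by
  ext w
  exact Fintype.sum_sum_type _

lemma excess_star_inl (f : E ⊕ J → ℝ) (v : V) :
    excess (starTail tail x s) (starHead head x s) f (.inl v)
      = excess tail head (fun e => f (.inl e)) v
        + ∑ j with x j = v, s.piecewise (fun j => f (.inr j)) (fun j => -f (.inr j)) j := by
  rw [starTail, starHead, excess_sumElim, excess_piecewise, Pi.add_apply, sum_filter]
  simp [excess, Pi.neg_def]

lemma excess_star_inr (f : E ⊕ J → ℝ) :
    excess (starTail tail x s) (starHead head x s) f (.inr ())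
      = -∑ j, s.piecewise (fun j => f (.inr j)) (fun j => -f (.inr j)) j := by
  rw [starTail, starHead, excess_sumElim, excess_piecewise, Pi.add_apply]
  simp [excess, Pi.neg_def]

variable {tail head x s}

lemma IsFeasible.star {d : V ⊕ Unit → ℝ} {lo hi : E ⊕ J → ℝ} (hd : d (.inr ()) = 0)
    (hlo : ∀ j, lo (.inr j) ≤ 0) (hhi : ∀ j, 0 ≤ hi (.inr j)) {f : E → ℝ}
    (hf : IsFeasible tail head (fun v => d (.inl v)) (fun e => lo (.inl e))
      (fun e => hi (.inl e)) f) :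
    IsFeasible (starTail tail x s) (starHead head x s) d lo hi (Sum.elim f 0) := by
  refine ⟨?_, ?_⟩
  · rintro (v | ⟨⟩)
    · rw [excess_star_inl]
      simpa [Set.piecewise] using hf.1 v
    · rw [excess_star_inr]
      simp [Set.piecewise, hd]
  · rintro (e | j)
    · exact hf.2 e
    · exact ⟨hlo j, hhi j⟩

lemma sum_abs_defect_le_of_excess_star [Fintype V] {d : V → ℝ} {f : E ⊕ J → ℝ}
    (hf : ∀ v, excess (starTail tail x s) (starHead head x s) f (.inl v) = d v) :
    ∑ v, |d v - excess tail head (fun e => f (.inl e)) v| ≤ ∑ j, |f (.inr j)| := by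
  have habs : ∀ j, |s.piecewise (fun j => f (.inr j)) (fun j => -f (.inr j)) j| = |f (.inr j)| :=
    fun j => by by_cases hj : j ∈ s <;> simp [hj]
  calc ∑ v, |d v - excess tail head (fun e => f (.inl e)) v|
      ≤ ∑ v, ∑ j with x j = v, |f (.inr j)| := by
        refine sum_le_sum fun v _ => ?_
        rw [← hf v, excess_star_inl, add_sub_cancel_left]
        simpa only [habs] using abs_sum_le_sum_abs
          (s.piecewise (fun j => f (.inr j)) fun j => -f (.inr j)) {j | x j = v}
    _ = ∑ j, |f (.inr j)| := sum_fiberwise _ _ _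

end Star

section ExactPenalty

variable {V E J : Type} [Fintype E] [Fintype J] [DecidableEq V] {tail head : E → V} {x : J → V}
  {s : Set J} [DecidablePred (· ∈ s)] {d : V ⊕ Unit → ℝ} {c lo hi f : E ⊕ J → ℝ}

theorem IsOptimal.star_inr_eq_zero [Finite V] (hd : d (.inr ()) = 0) (hlo : ∀ j, lo (.inr j) = 0)
    (hhi : ∀ j, 0 ≤ hi (.inr j)) (hc : ∀ j, ∑ e, |c (.inl e)| < c (.inr j))
    (hne : ∃ f₀, IsFeasible tail head (fun v => d (.inl v)) (fun e => lo (.inl e))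
      (fun e => hi (.inl e)) f₀)
    (hf : IsOptimal (starTail tail x s) (starHead head x s) d c lo hi f) (j : J) :
    f (.inr j) = 0 := by
  cases nonempty_fintype V
  have hf_nonneg : ∀ j, 0 ≤ f (.inr j) := fun j => (hlo j).symm.trans_le (hf.1.2 (.inr j)).1
  obtain ⟨g, hg, hgf⟩ := exists_isFeasible_forall_abs_sub_le hne fun e => hf.1.2 (.inl e)
  have hreroute : ∀ e, |g e - f (.inl e)| ≤ ∑ j, f (.inr j) := fun e =>
    calc |g e - f (.inl e)| ≤ ∑ j, |f (.inr j)| :=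
          (hgf e).trans (sum_abs_defect_le_of_excess_star fun v => hf.1.1 (.inl v))
      _ = ∑ j, f (.inr j) := sum_congr rfl fun j _ => abs_of_nonneg (hf_nonneg j)
  have hcost : fcost (fun e => c (.inl e)) g - fcost (fun e => c (.inl e)) (fun e => f (.inl e))
      ≤ (∑ e, |c (.inl e)|) * ∑ j, f (.inr j) := by
    rw [sum_mul]
    exact (fcost_sub_le _ _ _).trans <| sum_le_sum fun e _ =>
      mul_le_mul_of_nonneg_left (hreroute e) (abs_nonneg _)
  have hopt : fcost (fun e => c (.inl e)) (fun e => f (.inl e)) + ∑ j, c (.inr j) * f (.inr j)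
      ≤ fcost (fun e => c (.inl e)) g := by
    have h := hf.2 _ (hg.star hd (fun j => (hlo j).le) hhi)
    rw [fcost_sum, fcost_sum c (Sum.elim g 0)] at h
    simpa [fcost] using h
  have hsurplus : ∑ j, (c (.inr j) - ∑ e, |c (.inl e)|) * f (.inr j) ≤ 0 := by
    simp only [sub_mul, sum_sub_distrib, ← mul_sum]
    linarith
  have hterm : ∀ j ∈ univ, 0 ≤ (c (.inr j) - ∑ e, |c (.inl e)|) * f (.inr j) :=
    fun j _ => mul_nonneg (sub_pos.2 (hc j)).le (hf_nonneg j)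
  have hzero := (sum_eq_zero_iff_of_nonneg hterm).1 (hsurplus.antisymm (sum_nonneg hterm)) j
    (mem_univ j)
  exact (mul_eq_zero.1 hzero).resolve_left (sub_pos.2 (hc j)).ne'

theorem IsOptimal.of_star (hd : d (.inr ()) = 0) (hlo : ∀ j, lo (.inr j) ≤ 0)
    (hhi : ∀ j, 0 ≤ hi (.inr j))
    (hf : IsOptimal (starTail tail x s) (starHead head x s) d c lo hi f)
    (hf_zero : ∀ j, f (.inr j) = 0) :
    IsOptimal tail head (fun v => d (.inl v)) (fun e => c (.inl e)) (fun e => lo (.inl e))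
      (fun e => hi (.inl e)) (fun e => f (.inl e)) := by
  refine ⟨⟨fun v => ?_, fun e => hf.1.2 (.inl e)⟩, fun g hg => ?_⟩
  · have h := hf.1.1 (.inl v)
    rw [excess_star_inl] at h
    simpa [hf_zero, Set.piecewise] using h
  · have h := hf.2 _ (hg.star hd hlo hhi)
    rw [fcost_sum, fcost_sum c (Sum.elim g 0)] at h
    simpa [fcost, hf_zero] using h

end ExactPenalty

section Potential

lemma rpow_neg_le_two {a x : ℝ} (ha : a ∈ Set.Icc (0 : ℝ) 1) (hx : 1 / 2 ≤ x) :
    x ^ (-a) ≤ 2 :=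
  calc x ^ (-a) ≤ (1 / 2 : ℝ) ^ (-a) :=
        Real.rpow_le_rpow_of_nonpos (by norm_num) hx (neg_nonpos.2 ha.1)
    _ ≤ (1 / 2 : ℝ) ^ (-1 : ℝ) :=
        Real.rpow_le_rpow_of_exponent_ge (by norm_num) (by norm_num) (neg_le_neg ha.2)
    _ = 2 := by rw [Real.rpow_neg_one]; norm_num

lemma fAlpha_mem_Icc {m : ℕ} {U : ℝ} (hlog : 1 ≤ Real.log (m * U)) :
    fAlpha m U ∈ Set.Icc (0 : ℝ) 1 := by
  rw [fAlpha]
  exact ⟨by positivity, (div_le_one (by positivity)).2 (by linarith)⟩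

lemma fPhi_le {E : Type} [Fintype E] {U F : ℝ} {c lo hi f : E → ℝ}
    (hlog : 1 ≤ Real.log (Fintype.card E * U))
    (hgap : fcost c f - F ∈ Set.Icc 0 ((Fintype.card E * U) ^ 2))
    (hlo : ∀ e, 1 / 2 ≤ f e - lo e) (hhi : ∀ e, 1 / 2 ≤ hi e - f e) :
    fPhi (Fintype.card E) U F c lo hi f
      ≤ 200 * (Fintype.card E : ℝ) * Real.log (Fintype.card E * U) := by
  set N : ℝ := (Fintype.card E : ℝ)
  have hlog_gap : Real.log (fcost c f - F) ≤ 2 * Real.log (N * U) := by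
    rcases hgap.1.eq_or_lt with h | h
    -- If `f` is already optimal, the convention `log 0 = 0` is what applies.
    · rw [← h, Real.log_zero]
      positivity
    · calc Real.log (fcost c f - F) ≤ Real.log ((N * U) ^ 2) := Real.log_le_log h hgap.2
        _ = 2 * Real.log (N * U) := by rw [Real.log_pow, Nat.cast_ofNat]
  have hbarrier : ∑ e, ((hi e - f e) ^ (-fAlpha (Fintype.card E) U)
      + (f e - lo e) ^ (-fAlpha (Fintype.card E) U)) ≤ N * 4 := by
    have hα := fAlpha_mem_Icc hlog
    refine (sum_le_card_nsmul univ _ 4 fun e _ => ?_).trans_eq (nsmul_eq_mul _ _)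
    linarith [rpow_neg_le_two hα (hlo e), rpow_neg_le_two hα (hhi e)]
  calc fPhi (Fintype.card E) U F c lo hi f
      ≤ 20 * N * (2 * Real.log (N * U)) + N * 4 := by
        unfold fPhi
        gcongr
    _ ≤ 200 * N * Real.log (N * U) := by
        have hN : 0 ≤ N := Nat.cast_nonneg _
        linarith [mul_le_mul_of_nonneg_left hlog hN]

end Potential

section Midpoint

variable {V E : Type}

/-- The flow halfway between the capacities; it starts the interior point method because it stays
`1/2` away from both integral capacities. -/
def midFlow (lo hi : E → ℤ) (e : E) : ℝ := (lo e + hi e) / 2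

lemma half_le_midFlow_sub {lo hi : E → ℤ} {e : E} (h : lo e < hi e) :
    1 / 2 ≤ midFlow lo hi e - lo e := by
  have : (lo e : ℝ) + 1 ≤ hi e := by exact_mod_cast h
  rw [midFlow]
  linarith

lemma half_le_sub_midFlow {lo hi : E → ℤ} {e : E} (h : lo e < hi e) :
    1 / 2 ≤ hi e - midFlow lo hi e := by
  have : (lo e : ℝ) + 1 ≤ hi e := by exact_mod_cast h
  rw [midFlow]
  linarith

lemma midFlow_strict {lo hi : E → ℤ} {e : E} (h : lo e < hi e) :
    (lo e : ℝ) < midFlow lo hi e ∧ midFlow lo hi e < hi e := by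
  constructor <;> linarith [half_le_midFlow_sub h, half_le_sub_midFlow h]

variable [Fintype E] [DecidableEq V]

theorem fPhi_midFlow_le {tail head : E → V} {d : V → ℝ} {c lo hi : E → ℤ} {U : ℕ} (hU : 2 ≤ U)
    (hE : 2 ≤ Fintype.card E) (hbound : ∀ e, |c e| ≤ U ∧ |lo e| ≤ U ∧ |hi e| ≤ U)
    (hlohi : ∀ e, lo e < hi e) (hd : ∀ v, excess tail head (midFlow lo hi) v = d v) :
    fPhi (Fintype.card E) U
        (optimalValue tail head d (fun e => (c e : ℝ)) (fun e => (lo e : ℝ)) fun e => (hi e : ℝ))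
        (fun e => (c e : ℝ)) (fun e => (lo e : ℝ)) (fun e => (hi e : ℝ)) (midFlow lo hi)
      ≤ 200 * (Fintype.card E : ℝ) * Real.log (Fintype.card E * U) := by
  have hE' : (2 : ℝ) ≤ Fintype.card E := by exact_mod_cast hE
  have hU' : (2 : ℝ) ≤ U := by exact_mod_cast hU
  have hlog : 1 ≤ Real.log (Fintype.card E * U) := by
    rw [Real.le_log_iff_exp_le (by positivity)]
    nlinarith [Real.exp_one_lt_d9]
  have hfeas : IsFeasible tail head d (fun e => (lo e : ℝ)) (fun e => (hi e : ℝ))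
      (midFlow lo hi) :=
    ⟨hd, fun e => (midFlow_strict (hlohi e)).imp le_of_lt le_of_lt⟩
  have hrange : ∑ e, |(c e : ℝ)| * ((hi e : ℝ) - lo e) ≤ (Fintype.card E * U) ^ 2 :=
    calc ∑ e, |(c e : ℝ)| * ((hi e : ℝ) - lo e) ≤ Fintype.card E * (U * (2 * U) : ℝ) := by
          refine (sum_le_card_nsmul univ _ _ fun e _ => ?_).trans_eq (nsmul_eq_mul _ _)
          obtain ⟨hce, hloe, hhie⟩ := hbound e
          have hwidth : hi e - lo e ≤ 2 * U := by linarith [(abs_le.1 hloe).1, (abs_le.1 hhie).2]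
          exact mul_le_mul (mod_cast hce) (mod_cast hwidth)
            (sub_nonneg.2 (mod_cast (hlohi e).le)) (by positivity)
      _ = 2 * (Fintype.card E * U ^ 2) := by ring
      _ ≤ Fintype.card E * (Fintype.card E * U ^ 2) := by gcongr
      _ = (Fintype.card E * U) ^ 2 := by ring
  exact fPhi_le hlog
    (Set.Icc_subset_Icc_right hrange (hfeas.fcost_sub_optimalValue_mem_Icc _))
    (fun e => half_le_midFlow_sub (hlohi e)) fun e => half_le_sub_midFlow (hlohi e)

end Midpoint

section Imbalance

variable {V E : Type} [Fintype E] [DecidableEq V] {tail head : E → V} {d : V → ℤ}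
  {lo hi : E → ℤ}

/-- Twice the demand left unserved at `v` by the midpoint flow; the factor `2` keeps it
integral. -/
def imbalance (tail head : E → V) (d : V → ℤ) (lo hi : E → ℤ) (v : V) : ℤ :=
  2 * d v - ∑ e, (lo e + hi e) * ((if tail e = v then 1 else 0) - (if head e = v then 1 else 0))

lemma excess_midFlow_add_imbalance (v : V) :
    excess tail head (midFlow lo hi) v + imbalance tail head d lo hi v / 2 = d v := by
  have hmid : 2 * excess tail head (midFlow lo hi) v = ∑ e, ((lo e : ℝ) + hi e) *
      ((if tail e = v then 1 else 0) - (if head e = v then 1 else 0)) := by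
    rw [excess, mul_sum]
    exact sum_congr rfl fun e _ => by rw [midFlow]; ring
  rw [imbalance]
  push_cast
  linarith

lemma abs_imbalance_le {U : ℤ} {v : V} (hd : |d v| ≤ U) (hlo : ∀ e, |lo e| ≤ U)
    (hhi : ∀ e, |hi e| ≤ U) :
    |imbalance tail head d lo hi v| ≤ 2 * (Fintype.card E + 1) * U := by
  have hincidence : ∀ e, |(if tail e = v then (1 : ℤ) else 0) - (if head e = v then 1 else 0)|
      ≤ 1 := fun e => by split_ifs <;> simp
  have hsum : |∑ e, (lo e + hi e) *
      ((if tail e = v then (1 : ℤ) else 0) - (if head e = v then 1 else 0))|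
      ≤ Fintype.card E * (2 * U) := by
    refine (abs_sum_le_sum_abs _ _).trans
      ((sum_le_card_nsmul univ _ (2 * U) fun e _ => ?_).trans_eq (nsmul_eq_mul _ _))
    rw [abs_mul]
    calc |lo e + hi e| * _ ≤ |lo e + hi e| * 1 := by gcongr; exact hincidence e
      _ ≤ 2 * U := by linarith [abs_add_le (lo e) (hi e), hlo e, hhi e]
  calc |imbalance tail head d lo hi v| ≤ |2 * d v| + _ := abs_sub _ _
    _ ≤ 2 * U + Fintype.card E * (2 * U) := by
        rw [abs_mul, abs_two]
        gcongr
    _ = 2 * (Fintype.card E + 1) * U := by ring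

end Imbalance

section InitialPoint

variable {V E J : Type}

/-- Upper capacities of the star augmentation: the new edge at `x j` can carry the imbalance
`R (x j)`, which is twice the demand it has to serve. -/
def starUpper (hi : E → ℤ) (R : V → ℤ) (x : J → V) : E ⊕ J → ℤ :=
  Sum.elim hi fun j => |R (x j)|

/-- Costs of the star augmentation: `4mU²` on each new edge, more than `∑ e, |c e|` when `c` is
bounded by `U`. -/
def starCost [Fintype E] (c : E → ℤ) (U : ℕ) : E ⊕ J → ℤ :=
  Sum.elim c fun _ => 4 * Fintype.card E * (U : ℤ) ^ 2

variable {c lo hi : E → ℤ} {R : V → ℤ} {U : ℕ}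

lemma lt_starUpper (hlohi : ∀ e, lo e < hi e) {x : J → V} (hx : ∀ j, R (x j) ≠ 0) :
    ∀ a : E ⊕ J, Sum.elim lo 0 a < starUpper hi R x a :=
  Sum.rec hlohi fun j => abs_pos.2 (hx j)

lemma piecewise_midFlow_starUpper (x : J → V) (j : J) :
    {j | 0 < R (x j)}.piecewise (fun j => midFlow (Sum.elim lo 0) (starUpper hi R x) (.inr j))
      (fun j => -midFlow (Sum.elim lo 0) (starUpper hi R x) (.inr j)) j = (R (x j) : ℝ) / 2 := by
  by_cases hj : 0 < R (x j)
  · simp [midFlow, starUpper, hj, abs_of_pos]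
  · have hj' : (R (x j) : ℝ) ≤ 0 := by exact_mod_cast not_lt.1 hj
    simp [midFlow, starUpper, hj, abs_of_nonpos hj', neg_div]

lemma sum_comp_equiv_ne_zero [Fintype V] [Fintype J] (x : J ≃ {v // R v ≠ 0}) {F : V → ℝ}
    (hF : ∀ v, R v = 0 → F v = 0) : ∑ j, F (x j) = ∑ v, F v := by
  rw [x.sum_comp fun v => F v, ← Fintype.sum_subtype_add_sum_subtype (fun v => R v ≠ 0) F,
    left_eq_add]
  exact sum_eq_zero fun v _ => hF v (not_not.1 v.2)

variable [Fintype E]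

lemma abs_sumElim_zero_le (hE : 0 < Fintype.card E) {d : V → ℤ} (hd : ∀ v, |d v| ≤ U) :
    ∀ w : V ⊕ J, |Sum.elim d 0 w| ≤ 2 * Fintype.card E * U := by
  have : (1 : ℤ) ≤ Fintype.card E := by exact_mod_cast hE
  exact Sum.rec
    (fun v => (hd v).trans (le_mul_of_one_le_left (by positivity) (by linarith)))
    fun _ => abs_zero.trans_le (by positivity)

lemma sum_abs_lt_four_mul_card_mul_sq (hE : 0 < Fintype.card E) (hU : 0 < U)
    (hc : ∀ e, |c e| ≤ U) : ∑ e, |c e| < 4 * Fintype.card E * (U : ℤ) ^ 2 := by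
  have hUsq : (U : ℤ) ≤ (U : ℤ) ^ 2 := by exact_mod_cast Nat.le_self_pow two_ne_zero U
  calc ∑ e, |c e| ≤ Fintype.card E * (U : ℤ) :=
        (sum_le_card_nsmul univ _ _ fun e _ => hc e).trans_eq (nsmul_eq_mul _ _)
    _ ≤ Fintype.card E * (U : ℤ) ^ 2 := by gcongr
    _ < 4 * Fintype.card E * (U : ℤ) ^ 2 := by
        have : (0 : ℤ) < Fintype.card E * (U : ℤ) ^ 2 := by positivity
        linarith

lemma abs_starCost_le_and_abs_starUpper_le (hE : 0 < Fintype.card E) (hU : 0 < U)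
    (hc : ∀ e, |c e| ≤ U) (hlo : ∀ e, |lo e| ≤ U) (hhi : ∀ e, |hi e| ≤ U)
    (hR : ∀ v, |R v| ≤ 2 * (Fintype.card E + 1) * U) (x : J → V) (a : E ⊕ J) :
    |starCost c U a| ≤ 4 * Fintype.card E * (U : ℤ) ^ 2 ∧
      |Sum.elim lo 0 a| ≤ 4 * Fintype.card E * (U : ℤ) ^ 2 ∧
      |starUpper hi R x a| ≤ 4 * Fintype.card E * (U : ℤ) ^ 2 := by
  have : (1 : ℤ) ≤ Fintype.card E := by exact_mod_cast hE
  have hW : 2 * (Fintype.card E + 1) * (U : ℤ) ≤ 4 * Fintype.card E * (U : ℤ) ^ 2 :=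
    mul_le_mul (by linarith) (mod_cast Nat.le_self_pow two_ne_zero U) (by positivity)
      (by positivity)
  have hUW : (U : ℤ) ≤ 4 * Fintype.card E * (U : ℤ) ^ 2 :=
    (le_mul_of_one_le_left (by positivity) (by linarith)).trans hW
  rcases a with e | j
  · exact ⟨(hc e).trans hUW, (hlo e).trans hUW, (hhi e).trans hUW⟩
  · have hW_nonneg : 0 ≤ 4 * Fintype.card E * (U : ℤ) ^ 2 := by positivity
    exact ⟨(abs_of_nonneg hW_nonneg).le, abs_zero.trans_le hW_nonneg,
      (abs_abs _).trans_le ((hR _).trans hW)⟩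

theorem excess_star_midFlow [Fintype J] [Fintype V] [DecidableEq V] {tail head : E → V} {d : V → ℤ}
    (hR : ∀ v, excess tail head (midFlow lo hi) v + R v / 2 = d v) (hd : ∑ v, d v = 0)
    (x : J ≃ {v // R v ≠ 0}) (w : V ⊕ Unit) :
    excess (starTail tail (fun j => (x j : V)) {j | 0 < R (x j)})
      (starHead head (fun j => (x j : V)) {j | 0 < R (x j)})
      (midFlow (Sum.elim lo 0) (starUpper hi R fun j => (x j : V))) w = (Sum.elim d 0 w : ℤ) := by
  rcases w with v | ⟨⟩
  · have hserved : ∑ j with (x j : V) = v, (R (x j) : ℝ) / 2 = R v / 2 := by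
      rw [sum_filter, sum_comp_equiv_ne_zero x
        (F := fun u => if u = v then (R u : ℝ) / 2 else 0) fun u hu => by simp [hu]]
      simp
    rw [excess_star_inl, sum_congr rfl fun j _ => piecewise_midFlow_starUpper _ j, hserved]
    exact hR v
  · have hbalance : ∑ v, (R v : ℝ) / 2 = 0 :=
      calc ∑ v, (R v : ℝ) / 2 = ∑ v, (d v - excess tail head (midFlow lo hi) v) :=
            sum_congr rfl fun v _ => eq_sub_of_add_eq' (hR v)
        _ = 0 := by
            rw [sum_sub_distrib, sum_univ_excess, ← Int.cast_sum, hd, Int.cast_zero, sub_zero]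
    rw [excess_star_inr, sum_congr rfl fun j _ => piecewise_midFlow_starUpper _ j,
      sum_comp_equiv_ne_zero x (F := fun u => (R u : ℝ) / 2) fun u hu => by simp [hu], hbalance]
    simp

end InitialPoint

/-- initial point: any integral min-cost flow instance can be augmented
by at most `n` new edges through a new vertex `v*` into an instance `Ĩ` with polynomially
bounded integral data admitting a strictly feasible initial flow of potential at most
`200 m̃ log(m̃ Ũ)`, such that (if the original instance is feasible) optimal flows of `Ĩ`
vanish on the new edges and restrict to optimal flows of the original instance. -/
theorem stmt9
    {V E : Type} [Fintype V] [Fintype E] [DecidableEq V] [DecidableEq E]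
    (tail head : E → V)
    (m : ℕ) (hmcard : m = Fintype.card E) (hm : 2 ≤ m)
    (U : ℕ) (hU : 2 ≤ U)
    (d : V → ℤ) (hd : ∀ v, |d v| ≤ (U : ℤ)) (hdsum : ∑ v, d v = 0)
    (c lo hi : E → ℤ)
    (hc : ∀ e, |c e| ≤ (U : ℤ)) (hlo : ∀ e, |lo e| ≤ (U : ℤ)) (hhi : ∀ e, |hi e| ≤ (U : ℤ))
    (hlohi : ∀ e, lo e < hi e) :
    ∃ k : ℕ, k ≤ Fintype.card V ∧
      ∃ (tl hd' : E ⊕ Fin k → V ⊕ Unit) (dt : V ⊕ Unit → ℤ) (ct lot hit : E ⊕ Fin k → ℤ)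
        (finit : E ⊕ Fin k → ℝ),
        (∀ e, tl (Sum.inl e) = Sum.inl (tail e) ∧ hd' (Sum.inl e) = Sum.inl (head e)) ∧
        (∀ j : Fin k, tl (Sum.inr j) = Sum.inr () ∨ hd' (Sum.inr j) = Sum.inr ()) ∧
        (∀ w, |dt w| ≤ 2 * (m : ℤ) * (U : ℤ)) ∧
        (∀ a, |ct a| ≤ 4 * (m : ℤ) * (U : ℤ) ^ 2 ∧ |lot a| ≤ 4 * (m : ℤ) * (U : ℤ) ^ 2 ∧
          |hit a| ≤ 4 * (m : ℤ) * (U : ℤ) ^ 2) ∧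
        (∀ e, ct (Sum.inl e) = c e ∧ lot (Sum.inl e) = lo e ∧ hit (Sum.inl e) = hi e) ∧
        (∀ w, excess tl hd' finit w = (dt w : ℝ)) ∧
        (∀ a, (lot a : ℝ) < finit a ∧ finit a < (hit a : ℝ)) ∧
        fPhi (m + k) ((4 * m * U ^ 2 : ℕ) : ℝ)
            (sInf {x : ℝ | ∃ g : E ⊕ Fin k → ℝ,
              IsFeasible tl hd' (fun w => (dt w : ℝ)) (fun a => (lot a : ℝ))
                (fun a => (hit a : ℝ)) g ∧ fcost (fun a => (ct a : ℝ)) g = x})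
            (fun a => (ct a : ℝ)) (fun a => (lot a : ℝ)) (fun a => (hit a : ℝ)) finit
          ≤ 200 * ((m + k : ℕ) : ℝ) *
              Real.log (((m + k : ℕ) : ℝ) * ((4 * m * U ^ 2 : ℕ) : ℝ)) ∧
        ((∃ f0 : E → ℝ, IsFeasible tail head (fun v => (d v : ℝ)) (fun e => (lo e : ℝ))
            (fun e => (hi e : ℝ)) f0) →
          ∀ ft : E ⊕ Fin k → ℝ,
            IsFeasible tl hd' (fun w => (dt w : ℝ)) (fun a => (lot a : ℝ))
              (fun a => (hit a : ℝ)) ft →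
            (∀ g, IsFeasible tl hd' (fun w => (dt w : ℝ)) (fun a => (lot a : ℝ))
                (fun a => (hit a : ℝ)) g →
              fcost (fun a => (ct a : ℝ)) ft ≤ fcost (fun a => (ct a : ℝ)) g) →
            (∀ j : Fin k, ft (Sum.inr j) = 0) ∧
              IsFeasible tail head (fun v => (d v : ℝ)) (fun e => (lo e : ℝ))
                (fun e => (hi e : ℝ)) (fun e => ft (Sum.inl e)) ∧
              (∀ f', IsFeasible tail head (fun v => (d v : ℝ)) (fun e => (lo e : ℝ))
                  (fun e => (hi e : ℝ)) f' →
                fcost (fun e => (c e : ℝ)) (fun e => ft (Sum.inl e))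
                  ≤ fcost (fun e => (c e : ℝ)) f')) := by
  subst hmcard
  let R := imbalance tail head d lo hi
  let x := (Fintype.equivFin {v // R v ≠ 0}).symm
  have hE : 0 < Fintype.card E := two_pos.trans_le hm
  have hU₀ : 0 < U := two_pos.trans_le hU
  have hbound := abs_starCost_le_and_abs_starUpper_le hE hU₀ hc hlo hhi
    (fun v => abs_imbalance_le (tail := tail) (head := head) (hd v) hlo hhi) fun j => (x j : V)
  have hstrict := lt_starUpper hlohi fun j => (x j).2
  have hexcess := excess_star_midFlow (fun v => excess_midFlow_add_imbalance v) hdsum x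
  refine ⟨_, Fintype.card_subtype_le _, starTail tail (fun j => (x j : V)) {j | 0 < R (x j)},
    starHead head (fun j => (x j : V)) {j | 0 < R (x j)}, Sum.elim d 0, starCost c U,
    Sum.elim lo 0, starUpper hi R fun j => x j, _, fun e => ⟨rfl, rfl⟩,
    starTail_inr_or_starHead_inr _ _ _ _, abs_sumElim_zero_le hE hd, hbound,
    fun e => ⟨rfl, rfl, rfl⟩, hexcess, fun a => midFlow_strict (hstrict a), ?_, ?_⟩
  · have hU' : 2 ≤ 4 * Fintype.card E * U ^ 2 := by nlinarith [Nat.le_self_pow two_ne_zero U]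
    simpa only [Fintype.card_sum, Fintype.card_fin, optimalValue] using
      fPhi_midFlow_le hU' (by rw [Fintype.card_sum]; omega) (mod_cast hbound) hstrict hexcess
  · intro hne f hf hopt
    have hf_zero := IsOptimal.star_inr_eq_zero (by simp) (by simp) (by simp [starUpper])
      (fun _ => mod_cast sum_abs_lt_four_mul_card_mul_sq hE hU₀ hc) hne ⟨hf, hopt⟩
    exact ⟨hf_zero, IsOptimal.of_star (by simp) (by simp) (by simp [starUpper]) ⟨hf, hopt⟩ hf_zero⟩
end
end

section
/- (1/(n+1)-optimality implies exact optimality.) Consider a min-cost circulation instance on a directed multigraph G = (V,E) with n = |V|, integral capacities u ∈ ℤ^E with u_e ≥ 1, and integral costs c ∈ ℤ^E. Let f be a feasible integral circulation (f ∈ ℤ^E, 0 ≤ f ≤ u, and flow conservation at every vertex). Suppose there exists y ∈ ℝ^V such that every residual arc of G(f) has reduced cost with respect to y strictly greater than −1/(n+1); that is, for every arc e with f_e < u_e: c_e − y_{tail(e)} + y_{head(e)} > −1/(n+1), and for every arc e with f_e > 0: −c_e − y_{head(e)} + y_{tail(e)} > −1/(n+1). Then f is an exact minimizer: c^⊤f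 ≤ c^⊤f′ for every (not necessarily integral) circulation f′ with 0 ≤ f′ ≤ u. -/
/-!
Reduced costs leave the cost of a circulation unchanged, so a circulation is optimal as soon as the
reduced costs of its residual arcs are nonnegative. If they are only at least `-ε` with `n * ε < 1`,
round the potential: modulo `1`, its values at the `n` vertices are points on a circle of length
`1`, hence some arc of this circle of length more than `ε` contains none of them. Cutting the circle
there gives a shift `t` for which all the numbers `fract (y v - t)` lie in `[0, 1 - ε)`. Passing
from `y v` to `⌊y v - t⌋` then lowers each reduced cost by less than `1 - ε`. If the costs are
integers, so are the new reduced costs; on residual arcs they exceed `-1`, so they are nonnegative.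
-/

open Finset

section Circle

variable {V R : Type*}

theorem periodicPts_nonempty [Finite V] [Nonempty V] (g : V → V) : g.periodicPts.Nonempty := by
  obtain ⟨v⟩ := ‹Nonempty V›
  obtain ⟨m, n, hne, heq⟩ := Finite.exists_ne_map_eq_of_infinite fun n : ℕ ↦ g^[n] v
  wlog hmn : m < n generalizing m n
  · exact this n m hne.symm heq.symm (hne.symm.lt_of_le (not_lt.1 hmn))
  refine ⟨g^[m] v, Function.mk_mem_periodicPts (Nat.sub_pos_of_lt hmn) ?_⟩
  rw [Function.IsPeriodicPt, Function.IsFixedPt, ← Function.iterate_add_apply,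
    Nat.sub_add_cancel hmn.le]
  exact heq.symm

variable [Fintype V]

theorem sum_comp_periodicPts [AddCommMonoid R] (g : V → V) [DecidablePred (· ∈ g.periodicPts)]
    (y : V → R) :
    ∑ v with v ∈ g.periodicPts, y (g v) = ∑ v with v ∈ g.periodicPts, y v := by
  have hg := g.bijOn_periodicPts
  refine sum_nbij g (fun v hv ↦ ?_) ?_ ?_ fun _ _ ↦ rfl
  · simpa using hg.mapsTo (by simpa using hv)
  · simpa using hg.injOn
  · simpa using hg.surjOn

theorem exists_int_eq_sum_one_sub_fract [Ring R] [LinearOrder R] [FloorRing R] (g : V → V)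
    [DecidablePred (· ∈ g.periodicPts)] (y : V → R) :
    ∃ z : ℤ, (z : R) = ∑ v with v ∈ g.periodicPts, (1 - Int.fract (y (g v) - y v)) := by
  refine ⟨∑ v with v ∈ g.periodicPts, (1 + ⌊y (g v) - y v⌋), ?_⟩
  simp only [Int.fract, Int.cast_sum, Int.cast_add, Int.cast_one, sum_sub_distrib,
    sum_add_distrib, sum_comp_periodicPts g y, sub_self, zero_sub, sub_neg_eq_add]

theorem exists_forall_fract_sub_lt [CommRing R] [LinearOrder R] [IsStrictOrderedRing R]
    [FloorRing R] {ε : R} (hε : Fintype.card V * ε < 1) (y : V → R) :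
    ∃ t, ∀ v, Int.fract (y v - t) < 1 - ε := by
  classical
  by_contra! h
  -- From each point of the circle, `g` steps backwards by a positive distance at most `ε`. Along
  -- the cycles of `g` these steps add up to an integer, which is too small to be positive.
  choose g hg using fun v ↦ h (y v)
  obtain ⟨v₀, -⟩ := h 0
  have step_pos (v) : 0 < 1 - Int.fract (y (g v) - y v) := sub_pos.2 (Int.fract_lt_one _)
  have step_le (v) : 1 - Int.fract (y (g v) - y v) ≤ ε := sub_le_comm.1 (hg v)
  have ε_nonneg : 0 ≤ ε := (step_pos v₀).le.trans (step_le v₀)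
  obtain ⟨z, hz⟩ := exists_int_eq_sum_one_sub_fract g y
  have z_pos : 0 < (z : R) := by
    rw [hz]
    have : Nonempty V := ⟨v₀⟩
    obtain ⟨v, hv⟩ := periodicPts_nonempty g
    exact sum_pos (fun v _ ↦ step_pos v) ⟨v, by simpa using hv⟩
  have z_lt_one : (z : R) < 1 := calc
    (z : R) ≤ #{v | v ∈ g.periodicPts} * ε := by
      rw [hz, ← nsmul_eq_mul]
      exact sum_le_card_nsmul _ _ _ fun v _ ↦ step_le v
    _ ≤ Fintype.card V * ε := by gcongr; exact card_le_univ _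
    _ < 1 := hε
  norm_cast at z_pos z_lt_one
  lia

end Circle

section Circulation

variable {V E R : Type*} {tail head : E → V}

/-- Conservation of the flow `g` at every vertex of the multigraph with arcs `E`; capacities are
not part of the notion. -/
def IsCirculation [Fintype E] [DecidableEq V] [AddCommMonoid R] (tail head : E → V)
    (g : E → R) : Prop :=
  ∀ v, ∑ e with tail e = v, g e = ∑ e with head e = v, g e

/-- The reduced cost of the forward residual arc of `e` with respect to the potential `y`. The
backward residual arc of `e` has the opposite reduced cost. -/
def reducedCost [AddCommGroup R] (tail head : E → V) (c : E → R) (y : V → R) (e : E) : R :=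
  c e - y (tail e) + y (head e)

/-- `ε`-optimality of the flow `f` for the potential `y`, with lower capacities `l` and upper
capacities `u`: every residual arc has reduced cost at least `-ε`. The second field is this
condition for backward arcs. For `ε = 0` it is complementary slackness. -/
structure IsEpsOptimal [AddCommGroup R] [LinearOrder R] (tail head : E → V) (l u c f : E → R)
    (ε : R) (y : V → R) : Prop where
  neg_le_reducedCost : ∀ e, f e < u e → -ε ≤ reducedCost tail head c y e
  reducedCost_le : ∀ e, l e < f e → reducedCost tail head c y e ≤ ε

theorem reducedCost_intCast [Ring R] (c : E → ℤ) (p : V → ℤ) (e : E) :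
    reducedCost tail head (fun e ↦ (c e : R)) (fun v ↦ (p v : R)) e =
      (reducedCost tail head c p e : ℤ) := by
  simp only [reducedCost, Int.cast_add, Int.cast_sub]

namespace IsCirculation

variable [Fintype E] [DecidableEq V]

theorem intCast [AddCommGroupWithOne R] {f : E → ℤ} (hf : IsCirculation tail head f) :
    IsCirculation tail head fun e ↦ (f e : R) :=
  fun v ↦ by simpa only [Int.cast_sum] using congrArg (Int.cast : ℤ → R) (hf v)

theorem sum_potential_mul [NonUnitalNonAssocSemiring R] {g : E → R}
    (hg : IsCirculation tail head g) (y : V → R) :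
    ∑ e, y (tail e) * g e = ∑ e, y (head e) * g e := by
  have sum_by_vertex {h : E → V} {s : Finset V} (hs : ∀ e ∈ univ, h e ∈ s) :
      ∑ e, y (h e) * g e = ∑ v ∈ s, y v * ∑ e with h e = v, g e := by
    simp_rw [← sum_fiberwise_of_maps_to hs fun e ↦ y (h e) * g e, mul_sum]
    exact sum_congr rfl fun v _ ↦ sum_congr rfl fun e he ↦ by rw [(mem_filter.1 he).2]
  let s := univ.image tail ∪ univ.image head
  rw [sum_by_vertex (s := s) (by simp [s]), sum_by_vertex (s := s) (by simp [s])]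
  exact sum_congr rfl fun v _ ↦ congrArg (y v * ·) (hg v)

theorem sum_reducedCost_mul [NonUnitalNonAssocRing R] {g : E → R}
    (hg : IsCirculation tail head g) (c : E → R) (y : V → R) :
    ∑ e, reducedCost tail head c y e * g e = ∑ e, c e * g e := by
  simp only [reducedCost, add_mul, sub_mul, sum_add_distrib, sum_sub_distrib,
    hg.sum_potential_mul y, sub_add_cancel]

end IsCirculation

namespace IsEpsOptimal

theorem of_forall_neg_lt [AddCommGroup R] [LinearOrder R] [IsOrderedAddMonoid R]
    {l u c f : E → R} {ε : R} {y : V → R}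
    (hfwd : ∀ e, f e < u e → -ε < c e - y (tail e) + y (head e))
    (hbwd : ∀ e, l e < f e → -ε < -c e - y (head e) + y (tail e)) :
    IsEpsOptimal tail head l u c f ε y where
  neg_le_reducedCost e he := (hfwd e he).le
  reducedCost_le e he := by
    have backward_cost : -c e - y (head e) + y (tail e) = -reducedCost tail head c y e := by
      rw [reducedCost]
      abel
    exact neg_le_neg_iff.1 (backward_cost ▸ (hbwd e he).le)

theorem reducedCost_mul_le [Ring R] [LinearOrder R] [IsOrderedRing R] {l u c f : E → R}
    {y : V → R} (hy : IsEpsOptimal tail head l u c f 0 y) {e : E} {x : R}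
    (hx : x ∈ Set.Icc (l e) (u e)) :
    reducedCost tail head c y e * f e ≤ reducedCost tail head c y e * x := by
  rcases lt_trichotomy x (f e) with hlt | rfl | hgt
  · exact mul_le_mul_of_nonpos_left hlt.le (hy.reducedCost_le e (hx.1.trans_lt hlt))
  · rfl
  · have := hy.neg_le_reducedCost e (hgt.trans_le hx.2)
    exact mul_le_mul_of_nonneg_left hgt.le (neg_zero (G := R) ▸ this)

theorem sum_cost_le [Fintype E] [DecidableEq V] [Ring R] [LinearOrder R] [IsOrderedRing R]
    {l u c f f' : E → R} {y : V → R} (hy : IsEpsOptimal tail head l u c f 0 y)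
    (hf : IsCirculation tail head f) (hf' : IsCirculation tail head f')
    (hcap : ∀ e, f' e ∈ Set.Icc (l e) (u e)) :
    ∑ e, c e * f e ≤ ∑ e, c e * f' e := calc
  ∑ e, c e * f e = ∑ e, reducedCost tail head c y e * f e := (hf.sum_reducedCost_mul c y).symm
  _ ≤ ∑ e, reducedCost tail head c y e * f' e := sum_le_sum fun e _ ↦ hy.reducedCost_mul_le (hcap e)
  _ = ∑ e, c e * f' e := hf'.sum_reducedCost_mul c y

theorem exists_int_potential [Fintype V] [CommRing R] [LinearOrder R] [IsStrictOrderedRing R]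
    [FloorRing R] {l u f : E → R} {c : E → ℤ} {ε : R} {y : V → R}
    (hy : IsEpsOptimal tail head l u (fun e ↦ (c e : R)) f ε y) (hε : Fintype.card V * ε < 1) :
    ∃ p : V → ℤ, IsEpsOptimal tail head l u (fun e ↦ (c e : R)) f 0 (fun v ↦ (p v : R)) := by
  obtain ⟨t, ht⟩ := exists_forall_fract_sub_lt hε y
  let p (v : V) : ℤ := ⌊y v - t⌋
  have rounding (e : E) : ((reducedCost tail head c p e : ℤ) : R) =
      reducedCost tail head (fun e ↦ (c e : R)) y e +
        (Int.fract (y (tail e) - t) - Int.fract (y (head e) - t)) := by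
    simp only [reducedCost, p, Int.fract, Int.cast_add, Int.cast_sub]
    ring
  refine ⟨p, fun e he ↦ ?_, fun e he ↦ ?_⟩
  · have : -1 < reducedCost tail head c p e := by
      rw [← Int.cast_lt (R := R), Int.cast_neg, Int.cast_one]
      linarith [rounding e, hy.neg_le_reducedCost e he, ht (head e),
        Int.fract_nonneg (y (tail e) - t)]
    rw [reducedCost_intCast, neg_zero, Int.cast_nonneg_iff]
    lia
  · have : reducedCost tail head c p e < 1 := by
      rw [← Int.cast_lt (R := R), Int.cast_one]
      linarith [rounding e, hy.reducedCost_le e he, ht (tail e),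
        Int.fract_nonneg (y (head e) - t)]
    rw [reducedCost_intCast, Int.cast_nonpos]
    lia

end IsEpsOptimal

theorem stmt14_general [Fintype V] [Fintype E] [DecidableEq V] [CommRing R] [LinearOrder R]
    [IsStrictOrderedRing R] [FloorRing R] {l u f f' : E → R} {c : E → ℤ} {ε : R} {y : V → R}
    (hf : IsCirculation tail head f)
    (hy : IsEpsOptimal tail head l u (fun e ↦ (c e : R)) f ε y) (hε : Fintype.card V * ε < 1)
    (hf' : IsCirculation tail head f') (hcap : ∀ e, f' e ∈ Set.Icc (l e) (u e)) :
    ∑ e, (c e : R) * f e ≤ ∑ e, (c e : R) * f' e := by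
  obtain ⟨p, hp⟩ := hy.exists_int_potential hε
  exact hp.sum_cost_le hf hf' hcap

end Circulation

/-- `1/(n+1)`-optimality implies exact optimality: if a feasible
integral circulation `f` admits a potential `y` under which every residual arc has
reduced cost strictly greater than `-1/(n+1)`, then `f` minimizes `cᵀf` among all
(real-valued) circulations. -/
theorem stmt14
    {V E : Type} [Fintype V] [Fintype E] [DecidableEq V]
    (tail head : E → V)
    (u c : E → ℤ) (hu : ∀ e, 1 ≤ u e)
    (f : E → ℤ)
    (hfcap : ∀ e, 0 ≤ f e ∧ f e ≤ u e)
    (hfcons : ∀ v, (∑ e ∈ univ.filter (fun e => tail e = v), f e)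
      = ∑ e ∈ univ.filter (fun e => head e = v), f e)
    (y : V → ℝ)
    (hfwd : ∀ e, f e < u e →
      -(1 / ((Fintype.card V : ℝ) + 1)) < (c e : ℝ) - y (tail e) + y (head e))
    (hbwd : ∀ e, 0 < f e →
      -(1 / ((Fintype.card V : ℝ) + 1)) < -(c e : ℝ) - y (head e) + y (tail e)) :
    ∀ f' : E → ℝ,
      ((∀ e, 0 ≤ f' e ∧ f' e ≤ (u e : ℝ)) ∧
        ∀ v, (∑ e ∈ univ.filter (fun e => tail e = v), f' e)
          = ∑ e ∈ univ.filter (fun e => head e = v), f' e) →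
      (∑ e, (c e : ℝ) * (f e : ℝ)) ≤ ∑ e, (c e : ℝ) * f' e := by
  rintro f' ⟨hcap, hf'⟩
  have hy : IsEpsOptimal tail head 0 (fun e ↦ (u e : ℝ)) (fun e ↦ (c e : ℝ)) (fun e ↦ (f e : ℝ))
      (1 / ((Fintype.card V : ℝ) + 1)) y :=
    .of_forall_neg_lt (fun e he ↦ hfwd e (mod_cast he)) fun e he ↦ hbwd e (by simpa using he)
  refine stmt14_general (IsCirculation.intCast hfcons) hy ?_ hf' hcap
  rw [mul_one_div, div_lt_one (by positivity)]
  exact lt_add_one _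
end
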